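/- Let n > m ≥ 1 be integers. Let ν be the product measure on (ℝ × ℝ)^{m+1} whose k-th factor is N(0, (1/2)binom(m,k)) ⊗ N(0, (1/2)binom(m,k)), governing coefficients ((a_k, b_k))_{k=0}^m, and let q(z) = Σ_{k=0}^m (a_k + i b_k) z^k. For every ε₀ > 0 there exists ε₁ > 0 such that for all 0 < ε ≤ ε₁, the expected total number of zeros of the harmonic polynomial ε z^n + q(z) + conj(q(z)), i.e. ∫ (cardinality of {z ∈ ℂ : ε z^n + q(z) + conj(q(z)) = 0}) dν, is at least n·(√m − ε₀). -/

import Mathlib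

open MeasureTheory ProbabilityTheory Complex
open scoped NNReal

/-!
The value of `ε z ^ n + 2 Re q(z)` is real on the `2 n` rays through the roots of
`ζ ^ (2 * n) = 1`, and every zero lies on one of them. On the ray `{tan φ • ζ | 0 ≤ φ < π / 2}`
the centred Gaussian field `2 Re q` has correlation `cos (φ - ψ) ^ m`, which does not depend on
`ζ`. By Sheppard's formula it changes sign across an angular gap `δ` with probability
`arccos (cos δ ^ m) / π`, which is about `√m δ / π` for small `δ`. A fine uniform grid in `φ`
therefore yields almost `√m / 2` expected sign changes on each ray, hence almost `n √m` on all of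
them. As `ε → 0` the term `ε z ^ n` does not affect the sign at the finitely many grid points in the
limit, so the same count holds for small `ε`, and each sign change forces a zero.
-/

open Filter Set
open scoped ENNReal Real Topology

/-! ### Sheppard's formula -/

lemma lintegral_ofReal_mul_exp_neg_sq_div_two :
    ∫⁻ r in Ioi (0 : ℝ), ENNReal.ofReal (r * Real.exp (-r ^ 2 / 2)) = 1 := by
  have primitive (r : ℝ) :
      HasDerivAt (fun r ↦ -Real.exp (-r ^ 2 / 2)) (r * Real.exp (-r ^ 2 / 2)) r :=
    ((hasDerivAt_pow 2 r).fun_neg.div_const 2).exp.neg.congr_deriv (by push_cast; ring)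
  have limit : Tendsto (fun r : ℝ ↦ -Real.exp (-r ^ 2 / 2)) atTop (𝓝 0) := by
    rw [← neg_zero]
    refine (Real.tendsto_exp_atBot.comp ?_).neg
    simp_rw [neg_div]
    exact tendsto_neg_atTop_atBot.comp ((tendsto_pow_atTop two_ne_zero).atTop_div_const two_pos)
  have nonneg (r : ℝ) (hr : r ∈ Ioi (0 : ℝ)) : 0 ≤ r * Real.exp (-r ^ 2 / 2) :=
    mul_nonneg (le_of_lt hr) (Real.exp_nonneg _)
  rw [← ofReal_integral_eq_lintegral_ofReal
      (integrableOn_Ioi_deriv_of_nonneg' (fun r _ ↦ primitive r) nonneg limit)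
      ((ae_restrict_iff' measurableSet_Ioi).2 (.of_forall nonneg)),
    integral_Ioi_of_hasDerivAt_of_nonneg' (fun r _ ↦ primitive r) nonneg limit]
  simp

lemma gaussianReal_prod_eq_withDensity :
    (gaussianReal 0 1).prod (gaussianReal 0 1) = (volume : Measure (ℝ × ℝ)).withDensity
      fun p ↦ ENNReal.ofReal ((2 * π)⁻¹ * Real.exp (-(p.1 ^ 2 + p.2 ^ 2) / 2)) := by
  rw [gaussianReal_of_var_ne_zero 0 one_ne_zero,
    prod_withDensity (measurable_gaussianPDF 0 1) (measurable_gaussianPDF 0 1),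
    ← Measure.volume_eq_prod]
  congr 1 with p
  rw [gaussianPDF, gaussianPDF, ← ENNReal.ofReal_mul (gaussianPDFReal_nonneg _ _ _)]
  congr 1
  simp only [gaussianPDFReal, NNReal.coe_one, mul_one, sub_zero]
  rw [mul_mul_mul_comm, ← mul_inv, Real.mul_self_sqrt (by positivity), ← Real.exp_add]
  ring_nf

lemma gaussianReal_prod_apply_of_cone {A : Set (ℝ × ℝ)} (hA : MeasurableSet A)
    (cone : ∀ r : ℝ, 0 < r → ∀ p, r • p ∈ A ↔ p ∈ A) :
    (gaussianReal 0 1).prod (gaussianReal 0 1) A = ENNReal.ofReal (2 * π)⁻¹ *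
      volume {φ ∈ Ioo (-π) π | (Real.cos φ, Real.sin φ) ∈ A} := by
  set density : ℝ × ℝ → ℝ≥0∞ :=
    fun p ↦ ENNReal.ofReal ((2 * π)⁻¹ * Real.exp (-(p.1 ^ 2 + p.2 ^ 2) / 2))
  set S : Set ℝ := {φ | (Real.cos φ, Real.sin φ) ∈ A}
  have measurable_S : MeasurableSet S := hA.preimage (by fun_prop)
  have polar (q : ℝ × ℝ) (hq : q ∈ _root_.polarCoord.target) :
      ENNReal.ofReal q.1 • A.indicator density (_root_.polarCoord.symm q) =
        ENNReal.ofReal (q.1 * Real.exp (-q.1 ^ 2 / 2)) *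
          (ENNReal.ofReal (2 * π)⁻¹ * S.indicator 1 q.2) := by
    have hr : 0 < q.1 := hq.1
    have mem_iff : _root_.polarCoord.symm q ∈ A ↔ q.2 ∈ S :=
      cone q.1 hr (Real.cos q.2, Real.sin q.2)
    have norm_sq : (q.1 * Real.cos q.2) ^ 2 + (q.1 * Real.sin q.2) ^ 2 = q.1 ^ 2 := by
      linear_combination q.1 ^ 2 * Real.cos_sq_add_sin_sq q.2
    by_cases h : q.2 ∈ S
    · rw [indicator_of_mem (mem_iff.2 h), indicator_of_mem h, polarCoord_symm_apply, smul_eq_mul]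
      simp only [density, norm_sq, Pi.one_apply, mul_one]
      rw [← ENNReal.ofReal_mul hr.le, ← ENNReal.ofReal_mul (by positivity)]
      ring_nf
    · rw [indicator_of_notMem (mt mem_iff.1 h), indicator_of_notMem h]
      simp
  rw [gaussianReal_prod_eq_withDensity, withDensity_apply _ hA, ← lintegral_indicator hA,
    ← lintegral_comp_polarCoord_symm, setLIntegral_congr_fun
      _root_.polarCoord.open_target.measurableSet polar, _root_.polarCoord_target,
    Measure.volume_eq_prod, ← Measure.prod_restrict,
    lintegral_prod_mul (f := fun r : ℝ ↦ ENNReal.ofReal (r * Real.exp (-r ^ 2 / 2)))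
      (g := fun φ ↦ ENNReal.ofReal (2 * π)⁻¹ * S.indicator 1 φ) (by fun_prop)
      ((measurable_one.indicator measurable_S).const_mul _).aemeasurable,
    lintegral_ofReal_mul_exp_neg_sq_div_two, one_mul,
    lintegral_const_mul _ (measurable_one.indicator measurable_S),
    lintegral_indicator_one measurable_S, Measure.restrict_apply measurable_S]
  congr 2
  exact inter_comm _ _

lemma sep_cos_pos_and_cos_sub_neg {θ : ℝ} (hθ₀ : 0 ≤ θ) (hθ : θ ≤ π) :
    {φ ∈ Ioo (-π) π | 0 < Real.cos φ ∧ Real.cos (θ - φ) < 0} = Ioo (-(π / 2)) (θ - π / 2) := by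
  have hπ := Real.pi_pos
  ext φ
  simp only [mem_ofPred_eq, mem_Ioo]
  constructor
  · rintro ⟨⟨hφ₁, hφ₂⟩, cos_pos, cos_sub_neg⟩
    refine ⟨?_, ?_⟩ <;> by_contra! h
    · exact cos_pos.not_ge (Real.cos_neg φ ▸
        Real.cos_nonpos_of_pi_div_two_le_of_le (by linarith) (by linarith))
    · have hφ : φ < π / 2 := by
        by_contra! h'
        exact cos_pos.not_ge (Real.cos_nonpos_of_pi_div_two_le_of_le h' (by linarith))
      exact cos_sub_neg.not_ge (Real.cos_nonneg_of_mem_Icc ⟨by linarith, by linarith⟩)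
  · rintro ⟨hφ₁, hφ₂⟩
    refine ⟨⟨by linarith, by linarith⟩, Real.cos_pos_of_mem_Ioo ⟨hφ₁, by linarith⟩, ?_⟩
    exact Real.cos_neg_of_pi_div_two_lt_of_lt (by linarith) (by linarith)

lemma gaussianReal_prod_real_pos_and_neg {θ : ℝ} (hθ₀ : 0 ≤ θ) (hθ : θ ≤ π) :
    ((gaussianReal 0 1).prod (gaussianReal 0 1)).real
      {p | 0 < p.1 ∧ Real.cos θ * p.1 + Real.sin θ * p.2 < 0} = θ / (2 * π) := by
  have measurable : MeasurableSet
      {p : ℝ × ℝ | 0 < p.1 ∧ Real.cos θ * p.1 + Real.sin θ * p.2 < 0} := by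
    measurability
  rw [measureReal_def, gaussianReal_prod_apply_of_cone measurable]
  · simp only [mem_ofPred_eq, ← Real.cos_sub]
    rw [sep_cos_pos_and_cos_sub_neg hθ₀ hθ, Real.volume_Ioo, ← ENNReal.ofReal_mul (by positivity),
      ENNReal.toReal_ofReal (by ring_nf; positivity)]
    ring
  · rintro r hr ⟨x, y⟩
    simp only [mem_ofPred_eq, Prod.smul_mk, smul_eq_mul, mul_left_comm _ r, ← mul_add,
      mul_pos_iff_of_pos_left hr]
    exact and_congr_right' (smul_neg_iff_of_pos_left hr)

section Sheppard

variable {Ω Ω' : Type*} {mΩ : MeasurableSpace Ω} {mΩ' : MeasurableSpace Ω'}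
  {P : Measure Ω} {P' : Measure Ω'} {X Y : Ω → ℝ} {X' Y' : Ω' → ℝ}

lemma sq_covariance_le [IsFiniteMeasure P] (hX : MemLp X 2 P) (hY : MemLp Y 2 P) :
    cov[X, Y; P] ^ 2 ≤ Var[X; P] * Var[Y; P] := by
  have nonneg (t : ℝ) :
      0 ≤ Var[X; P] * (t * t) + 2 * cov[X, Y; P] * t + Var[Y; P] := by
    have := variance_nonneg (fun ω ↦ t * X ω + Y ω) P
    rw [variance_fun_add (hX.const_mul t) hY, variance_const_mul, covariance_const_mul_left] at this
    linarith
  linarith [discrim_le_zero nonneg, discrim.eq_1 Var[X; P] (2 * cov[X, Y; P]) Var[Y; P]]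

lemma abs_covariance_div_sqrt_mul_sqrt_le_one [IsFiniteMeasure P] (hX : MemLp X 2 P)
    (hY : MemLp Y 2 P) : |cov[X, Y; P] / (√Var[X; P] * √Var[Y; P])| ≤ 1 := by
  rw [abs_div, ← Real.sqrt_mul (variance_nonneg X P), abs_of_nonneg (Real.sqrt_nonneg _)]
  exact div_le_one_of_le₀ (Real.abs_le_sqrt (sq_covariance_le hX hY)) (Real.sqrt_nonneg _)

lemma variance_const_mul_add_const_mul [IsFiniteMeasure P] (hX : MemLp X 2 P) (hY : MemLp Y 2 P)
    (a b : ℝ) : Var[fun ω ↦ a * X ω + b * Y ω; P] =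
      a ^ 2 * Var[X; P] + 2 * a * b * cov[X, Y; P] + b ^ 2 * Var[Y; P] := by
  rw [variance_fun_add (hX.const_mul a) (hY.const_mul b), variance_const_mul, variance_const_mul,
    covariance_const_mul_left, covariance_const_mul_right]
  ring

lemma covariance_const_mul_add_const_mul_right [IsFiniteMeasure P] {Z : Ω → ℝ}
    (hX : MemLp X 2 P) (hY : MemLp Y 2 P) (hZ : MemLp Z 2 P) (a b : ℝ) :
    cov[X, fun ω ↦ a * Y ω + b * Z ω; P] = a * cov[X, Y; P] + b * cov[X, Z; P] := by
  rw [← covariance_const_mul_right, ← covariance_const_mul_right]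
  exact covariance_add_right hX (hY.const_mul a) (hZ.const_mul b)

lemma identDistrib_prodMk_of_hasGaussianLaw (h : HasGaussianLaw (fun ω ↦ (X ω, Y ω)) P)
    (h' : HasGaussianLaw (fun ω ↦ (X' ω, Y' ω)) P') (meanX : P[X] = P'[X']) (meanY : P[Y] = P'[Y'])
    (varX : Var[X; P] = Var[X'; P']) (varY : Var[Y; P] = Var[Y'; P'])
    (cov_eq : cov[X, Y; P] = cov[X', Y'; P']) :
    IdentDistrib (fun ω ↦ (X ω, Y ω)) (fun ω ↦ (X' ω, Y' ω)) P P' where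
  aemeasurable_fst := h.aemeasurable
  aemeasurable_snd := h'.aemeasurable
  map_eq := by
    have := h.isProbabilityMeasure
    have := h'.isProbabilityMeasure
    have := Measure.isProbabilityMeasure_map h.aemeasurable
    have := Measure.isProbabilityMeasure_map h'.aemeasurable
    refine Measure.ext_of_charFunDual (funext fun L ↦ ?_)
    obtain ⟨a, b, apply_eq⟩ : ∃ a b : ℝ, ∀ x y, L (x, y) = a * x + b * y :=
      ⟨L (1, 0), L (0, 1), fun x y ↦ by
        rw [mul_comm, mul_comm _ y, ← smul_eq_mul, ← smul_eq_mul, ← map_smul, ← map_smul, ← map_add]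
        simp⟩
    rw [h.charFunDual_map_eq_fun, h'.charFunDual_map_eq_fun]
    simp only [apply_eq]
    rw [variance_const_mul_add_const_mul h.fst.memLp_two h.snd.memLp_two,
      variance_const_mul_add_const_mul h'.fst.memLp_two h'.snd.memLp_two, varX, varY, cov_eq,
      integral_add (h.fst.integrable.const_mul _) (h.snd.integrable.const_mul _),
      integral_add (h'.fst.integrable.const_mul _) (h'.snd.integrable.const_mul _)]
    simp only [integral_const_mul, meanX, meanY]

lemma measureReal_mul_neg_eq_two_mul (h : HasGaussianLaw (fun ω ↦ (X ω, Y ω)) P)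
    (meanX : P[X] = 0) (meanY : P[Y] = 0) :
    P.real {ω | X ω * Y ω < 0} = 2 * P.real {ω | 0 < X ω ∧ Y ω < 0} := by
  have := h.isProbabilityMeasure
  have symmetric : IdentDistrib (fun ω ↦ (X ω, Y ω)) (fun ω ↦ (-X ω, -Y ω)) P P :=
    identDistrib_prodMk_of_hasGaussianLaw h h.fun_neg (by rw [integral_neg, meanX, neg_zero])
      (by rw [integral_neg, meanY, neg_zero]) variance_fun_neg.symm variance_fun_neg.symm
      (by rw [covariance_fun_neg_left, covariance_fun_neg_right, neg_neg])
  have measurable : MeasurableSet (Ioi (0 : ℝ) ×ˢ Iio (0 : ℝ)) :=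
    measurableSet_Ioi.prod measurableSet_Iio
  have reflect : P.real {ω | 0 < X ω ∧ Y ω < 0} = P.real {ω | X ω < 0 ∧ 0 < Y ω} := by
    simpa [measureReal_def, preimage, mem_prod] using
      congrArg ENNReal.toReal (symmetric.measure_mem_eq measurable)
  have split : {ω | X ω * Y ω < 0} = {ω | 0 < X ω ∧ Y ω < 0} ∪ {ω | X ω < 0 ∧ 0 < Y ω} := by
    ext ω
    simp [mul_neg_iff]
  rw [split, measureReal_union₀, ← reflect, two_mul]
  · exact h.aemeasurable.nullMeasurable (measurableSet_Iio.prod measurableSet_Ioi)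
  · exact (disjoint_left.2 fun ω h₁ h₂ ↦ h₁.1.not_gt h₂.1).aedisjoint

section StandardPair

variable (v : ℝ≥0) (a b c d : ℝ)

lemma hasGaussianLaw_gaussianReal_prod : HasGaussianLaw (fun p : ℝ × ℝ ↦ (p.1, p.2))
    ((gaussianReal 0 v).prod (gaussianReal 0 v)) :=
  IsGaussian.hasGaussianLaw_id

lemma hasGaussianLaw_linear_gaussianReal_prod : HasGaussianLaw (fun p : ℝ × ℝ ↦ a * p.1 + b * p.2)
    ((gaussianReal 0 v).prod (gaussianReal 0 v)) :=
  (hasGaussianLaw_gaussianReal_prod v).map_fun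
    (a • ContinuousLinearMap.fst ℝ ℝ ℝ + b • ContinuousLinearMap.snd ℝ ℝ ℝ)

lemma integral_linear_gaussianReal_prod :
    ∫ p, a * p.1 + b * p.2 ∂(gaussianReal 0 v).prod (gaussianReal 0 v) = 0 := by
  have law := hasGaussianLaw_gaussianReal_prod v
  have mean_fst : ∫ p, p.1 ∂(gaussianReal 0 v).prod (gaussianReal 0 v) = 0 :=
    (integral_fun_fst id).trans (by simp)
  have mean_snd : ∫ p, p.2 ∂(gaussianReal 0 v).prod (gaussianReal 0 v) = 0 :=
    (integral_fun_snd id).trans (by simp)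
  rw [integral_add (law.fst.integrable.const_mul a) (law.snd.integrable.const_mul b),
    integral_const_mul, integral_const_mul, mean_fst, mean_snd, mul_zero, mul_zero, add_zero]

lemma covariance_linear_gaussianReal_prod :
    cov[fun p ↦ a * p.1 + b * p.2, fun p ↦ c * p.1 + d * p.2;
      (gaussianReal 0 v).prod (gaussianReal 0 v)] = (a * c + b * d) * v := by
  set γ := (gaussianReal 0 v).prod (gaussianReal 0 v)
  have law : HasGaussianLaw (fun p : ℝ × ℝ ↦ (p.1, p.2)) γ := hasGaussianLaw_gaussianReal_prod v
  have fst_memLp := law.fst.memLp_two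
  have snd_memLp := law.snd.memLp_two
  have linear_memLp : MemLp (fun p ↦ a * p.1 + b * p.2) 2 γ :=
    (hasGaussianLaw_linear_gaussianReal_prod v a b).memLp_two
  have var_fst : Var[Prod.fst; γ] = v :=
    (measurePreserving_fst.variance_fun_comp aemeasurable_id).trans variance_id_gaussianReal
  have var_snd : Var[Prod.snd; γ] = v :=
    (measurePreserving_snd.variance_fun_comp aemeasurable_id).trans variance_id_gaussianReal
  have cov_fst_snd : cov[Prod.fst, Prod.snd; γ] = 0 :=
    covariance_fst_snd_prod (memLp_id_gaussianReal 2) (memLp_id_gaussianReal 2)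
  rw [covariance_const_mul_add_const_mul_right linear_memLp fst_memLp snd_memLp,
    covariance_comm _ Prod.fst, covariance_comm (fun p ↦ a * p.1 + b * p.2) Prod.snd,
    covariance_const_mul_add_const_mul_right fst_memLp fst_memLp snd_memLp,
    covariance_const_mul_add_const_mul_right snd_memLp fst_memLp snd_memLp,
    covariance_self fst_memLp.aemeasurable, covariance_self snd_memLp.aemeasurable,
    covariance_comm Prod.snd, cov_fst_snd, var_fst, var_snd]
  ring

end StandardPair

lemma identDistrib_rotated_gaussian (h : HasGaussianLaw (fun ω ↦ (X ω, Y ω)) P)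
    (meanX : P[X] = 0) (meanY : P[Y] = 0) {σ τ θ : ℝ} (varX : Var[X; P] = σ ^ 2)
    (varY : Var[Y; P] = τ ^ 2) (cov_eq : cov[X, Y; P] = σ * τ * Real.cos θ) :
    IdentDistrib (fun ω ↦ (X ω, Y ω))
      (fun p ↦ (σ * p.1, τ * (Real.cos θ * p.1 + Real.sin θ * p.2))) P
      ((gaussianReal 0 1).prod (gaussianReal 0 1)) := by
  set γ := (gaussianReal 0 1).prod (gaussianReal 0 1)
  let L : ℝ × ℝ →L[ℝ] ℝ × ℝ := (σ • ContinuousLinearMap.fst ℝ ℝ ℝ).prod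
    (τ • (Real.cos θ • ContinuousLinearMap.fst ℝ ℝ ℝ +
      Real.sin θ • ContinuousLinearMap.snd ℝ ℝ ℝ))
  have law := (hasGaussianLaw_gaussianReal_prod 1).map_fun L
  have mean_fst : ∫ p, p.1 ∂γ = 0 := by simpa using integral_linear_gaussianReal_prod 1 1 0
  have var_fst : Var[Prod.fst; γ] = 1 :=
    (measurePreserving_fst.variance_fun_comp aemeasurable_id).trans variance_id_gaussianReal
  have cov_fst : cov[Prod.fst, fun p ↦ Real.cos θ * p.1 + Real.sin θ * p.2; γ] = Real.cos θ := by
    simpa using covariance_linear_gaussianReal_prod 1 1 0 (Real.cos θ) (Real.sin θ)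
  refine identDistrib_prodMk_of_hasGaussianLaw h law ?_ ?_ ?_ ?_ ?_
  · rw [meanX, integral_const_mul, mean_fst, mul_zero]
  · rw [meanY, integral_const_mul, integral_linear_gaussianReal_prod, mul_zero]
  · rw [varX, variance_const_mul, var_fst, mul_one]
  · rw [varY, variance_const_mul, ← covariance_self (by fun_prop),
      covariance_linear_gaussianReal_prod, ← sq, ← sq, Real.cos_sq_add_sin_sq]
    simp
  · rw [cov_eq, covariance_const_mul_left, covariance_const_mul_right, cov_fst,
      mul_assoc]

theorem measureReal_mul_neg_eq_arccos_div_pi (h : HasGaussianLaw (fun ω ↦ (X ω, Y ω)) P)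
    (meanX : P[X] = 0) (meanY : P[Y] = 0) (varX : Var[X; P] ≠ 0) (varY : Var[Y; P] ≠ 0) :
    P.real {ω | X ω * Y ω < 0} =
      Real.arccos (cov[X, Y; P] / (√Var[X; P] * √Var[Y; P])) / π := by
  have := h.isProbabilityMeasure
  set σ := √Var[X; P]
  set τ := √Var[Y; P]
  set θ := Real.arccos (cov[X, Y; P] / (σ * τ))
  have hσ : 0 < σ := Real.sqrt_pos.2 ((variance_nonneg X P).lt_of_ne' varX)
  have hτ : 0 < τ := Real.sqrt_pos.2 ((variance_nonneg Y P).lt_of_ne' varY)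
  have cov_eq : cov[X, Y; P] = σ * τ * Real.cos θ := by
    have corr := abs_le.1 (abs_covariance_div_sqrt_mul_sqrt_le_one h.fst.memLp_two h.snd.memLp_two)
    rw [Real.cos_arccos corr.1 corr.2, mul_div_cancel₀ _ (mul_pos hσ hτ).ne']
  have model := identDistrib_rotated_gaussian h meanX meanY
    (Real.sq_sqrt (variance_nonneg X P)).symm (Real.sq_sqrt (variance_nonneg Y P)).symm cov_eq
  have measurable : MeasurableSet (Ioi (0 : ℝ) ×ˢ Iio (0 : ℝ)) :=
    measurableSet_Ioi.prod measurableSet_Iio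
  have unscale (x y : ℝ) : 0 < σ * x ∧ τ * y < 0 ↔ 0 < x ∧ y < 0 :=
    and_congr (mul_pos_iff_of_pos_left hσ) (smul_neg_iff_of_pos_left hτ)
  calc P.real {ω | X ω * Y ω < 0}
      = 2 * P.real {ω | 0 < X ω ∧ Y ω < 0} := measureReal_mul_neg_eq_two_mul h meanX meanY
    _ = 2 * ((gaussianReal 0 1).prod (gaussianReal 0 1)).real
          {p | 0 < σ * p.1 ∧ τ * (Real.cos θ * p.1 + Real.sin θ * p.2) < 0} := by
        congr 1
        exact congrArg ENNReal.toReal (model.measure_mem_eq measurable)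
    _ = 2 * (θ / (2 * π)) := by
        simp only [unscale]
        rw [gaussianReal_prod_real_pos_and_neg (Real.arccos_nonneg _) (Real.arccos_le_pi _)]
    _ = θ / π := by ring

end Sheppard

lemma tendsto_measureReal_lt_zero {Ω ι : Type*} [MeasurableSpace Ω] {P : Measure Ω}
    [IsFiniteMeasure P] {l : Filter ι} [l.IsCountablyGenerated] {Z : ι → Ω → ℝ} {Z₀ : Ω → ℝ}
    (measurable : ∀ i, Measurable (Z i)) (measurable₀ : Measurable Z₀)
    (lim : ∀ᵐ ω ∂P, Tendsto (Z · ω) l (𝓝 (Z₀ ω))) (ne_zero : ∀ᵐ ω ∂P, Z₀ ω ≠ 0) :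
    Tendsto (fun i ↦ P.real {ω | Z i ω < 0}) l (𝓝 (P.real {ω | Z₀ ω < 0})) := by
  refine (ENNReal.tendsto_toReal (measure_ne_top _ _)).comp
    (tendsto_measure_of_ae_tendsto_indicator_of_isFiniteMeasure l
      (measurableSet_lt measurable₀ measurable_const)
      (fun i ↦ measurableSet_lt (measurable i) measurable_const) ?_)
  filter_upwards [lim, ne_zero] with ω lim ne_zero
  obtain neg | pos := ne_zero.lt_or_gt
  · filter_upwards [lim.eventually_lt_const neg] with i hi using iff_of_true hi neg
  · filter_upwards [lim.eventually_const_lt pos] with i hi using iff_of_false hi.not_gt pos.not_gt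

/-! ### Asymptotics of the sign-change probability -/

lemma two_mul_abs_sin_mul_sqrt_le_arccos_cos_pow (m : ℕ) (δ : ℝ) :
    2 * |Real.sin (δ / 2)| * √(∑ i ∈ Finset.range m, Real.cos δ ^ i) ≤
      Real.arccos (Real.cos δ ^ m) := by
  set θ := Real.arccos (Real.cos δ ^ m)
  have abs_pow_le : |Real.cos δ ^ m| ≤ 1 := by
    rw [abs_pow]
    exact pow_le_one₀ (abs_nonneg _) (Real.abs_cos_le_one δ)
  have cos_θ : Real.cos θ = Real.cos δ ^ m :=
    Real.cos_arccos (abs_le.1 abs_pow_le).1 (abs_le.1 abs_pow_le).2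
  have half_angle : 1 - Real.cos δ = 2 * Real.sin (δ / 2) ^ 2 := by
    rw [Real.sin_sq_eq_half_sub, mul_div_cancel₀ δ two_ne_zero]
    ring
  have geometric : 1 - Real.cos δ ^ m =
      (1 - Real.cos δ) * ∑ i ∈ Finset.range m, Real.cos δ ^ i :=
    (mul_neg_geom_sum _ m).symm
  rw [← Real.sqrt_sq_eq_abs, mul_assoc, ← Real.sqrt_mul (sq_nonneg _), ← le_div_iff₀' two_pos]
  refine Real.sqrt_le_iff.2 ⟨div_nonneg (Real.arccos_nonneg _) zero_le_two, ?_⟩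
  have quadratic := Real.one_sub_sq_div_two_le_cos (x := θ)
  rw [cos_θ] at quadratic
  rw [half_angle] at geometric
  linarith

lemma tendsto_mul_abs_sin_mul_sqrt (m : ℕ) :
    Tendsto (fun L : ℕ ↦ 2 * L * (2 * |Real.sin (π / (2 * (L + 1)) / 2)| *
      √(∑ i ∈ Finset.range m, Real.cos (π / (2 * (L + 1))) ^ i) / π)) atTop (𝓝 √m) := by
  set δ : ℕ → ℝ := fun L ↦ π / (2 * (L + 1))
  have lim_δ : Tendsto δ atTop (𝓝 0) := by
    have := (tendsto_one_div_add_atTop_nhds_zero_nat (𝕜 := ℝ)).const_mul (π / 2)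
    rw [mul_zero] at this
    exact this.congr fun L ↦ by simp only [δ]; field_simp
  have lim_sqrt : Tendsto (fun L ↦ √(∑ i ∈ Finset.range m, Real.cos (δ L) ^ i)) atTop (𝓝 √m) := by
    have cont : Continuous fun x : ℝ ↦ √(∑ i ∈ Finset.range m, Real.cos x ^ i) := by fun_prop
    simpa [Function.comp_def] using (cont.tendsto 0).comp lim_δ
  have lim_sinc : Tendsto (fun L ↦ |Real.sinc (δ L / 2)|) atTop (𝓝 1) := by
    have cont : Continuous fun x ↦ |Real.sinc (x / 2)| := by fun_prop
    simpa [Function.comp_def] using (cont.tendsto 0).comp lim_δ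
  have := ((tendsto_natCast_div_add_atTop (1 : ℝ)).mul lim_sinc).mul lim_sqrt
  rw [one_mul, one_mul] at this
  refine this.congr fun L ↦ ?_
  have δ_pos : 0 < δ L := by positivity
  change _ = 2 * L * (2 * |Real.sin (δ L / 2)| * _ / π)
  rw [Real.sinc_of_ne_zero (by positivity), abs_div, abs_of_pos (half_pos δ_pos)]
  simp only [δ]
  field_simp

lemma eventually_lt_mul_arccos_cos_pow {m : ℕ} {κ : ℝ} (hκ : κ < √m) :
    ∀ᶠ L : ℕ in atTop,
      κ < 2 * L * (Real.arccos (Real.cos (π / (2 * (L + 1))) ^ m) / π) := by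
  filter_upwards [(tendsto_mul_abs_sin_mul_sqrt m).eventually_const_lt hκ] with L hL
  refine hL.trans_le ?_
  gcongr
  exact two_mul_abs_sin_mul_sqrt_le_arccos_cos_pow m _

/-! ### Sign changes and the number of zeros -/

lemma exists_mem_Ioo_eq_zero_of_mul_neg {f : ℝ → ℝ} {a b : ℝ} (hab : a ≤ b)
    (hf : ContinuousOn f (Icc a b)) (neg : f a * f b < 0) : ∃ x ∈ Ioo a b, f x = 0 := by
  obtain ⟨ha, hb⟩ | ⟨ha, hb⟩ := mul_neg_iff.1 neg
  · exact intermediate_value_Ioo' hab hf ⟨hb, ha⟩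
  · exact intermediate_value_Ioo hab hf ⟨ha, hb⟩

lemma encard_sign_changes_le_encard_zeros {E : Type*} [NormedAddCommGroup E] [NormedSpace ℝ E]
    {f : E → ℝ} (hf : Continuous f) {directions : Set E} (unit : ∀ ζ ∈ directions, ‖ζ‖ = 1)
    {ρ : ℕ → ℝ} {L : ℕ} (ρ_zero : 0 ≤ ρ 0) (ρ_mono : StrictMonoOn ρ (Iic L)) :
    {p : E × ℕ | (p.1 ∈ directions ∧ p.2 < L) ∧
        f (ρ p.2 • p.1) * f (ρ (p.2 + 1) • p.1) < 0}.encard ≤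
      {z | f z = 0 ∧ ∃ r : ℝ, ∃ ζ ∈ directions, z = r • ζ}.encard := by
  have crossing (p : E × ℕ) (hp : (p.1 ∈ directions ∧ p.2 < L) ∧
      f (ρ p.2 • p.1) * f (ρ (p.2 + 1) • p.1) < 0) :
      ∃ x ∈ Ioo (ρ p.2) (ρ (p.2 + 1)), f (x • p.1) = 0 := by
    have le_succ : ρ p.2 ≤ ρ (p.2 + 1) :=
      ρ_mono.monotoneOn (mem_Iic.2 hp.1.2.le) (mem_Iic.2 hp.1.2) p.2.le_succ
    have cont : Continuous fun x : ℝ ↦ f (x • p.1) := by fun_prop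
    exact exists_mem_Ioo_eq_zero_of_mul_neg le_succ cont.continuousOn hp.2
  choose! x x_mem x_zero using crossing
  refine encard_le_encard_of_injOn (f := fun p ↦ x p • p.1)
    (fun p hp ↦ ⟨x_zero p hp, x p, p.1, hp.1.1, rfl⟩) ?_
  intro p hp p' hp' (point_eq : x p • p.1 = x p' • p'.1)
  have x_pos {p : E × ℕ} (hp : (p.1 ∈ directions ∧ p.2 < L) ∧
      f (ρ p.2 • p.1) * f (ρ (p.2 + 1) • p.1) < 0) : 0 < x p :=
    (ρ_zero.trans (ρ_mono.monotoneOn (mem_Iic.2 L.zero_le) (mem_Iic.2 hp.1.2.le)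
      p.2.zero_le)).trans_lt (x_mem p hp).1
  have x_eq : x p = x p' := by
    simpa [norm_smul, unit _ hp.1.1, unit _ hp'.1.1, abs_of_pos (x_pos hp),
      abs_of_pos (x_pos hp')] using congrArg norm point_eq
  have le_of_mem {p p' : E × ℕ} (hp : p.2 < L) (hp' : p'.2 < L) (hx : x p = x p')
      (mem : x p ∈ Ioo (ρ p.2) (ρ (p.2 + 1))) (mem' : x p' ∈ Ioo (ρ p'.2) (ρ (p'.2 + 1))) :
      p.2 ≤ p'.2 :=
    Nat.lt_succ_iff.1 ((ρ_mono.lt_iff_lt (mem_Iic.2 hp.le) (mem_Iic.2 hp')).1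
      (mem.1.trans (hx ▸ mem'.2)))
  refine Prod.ext (smul_right_injective E (x_pos hp').ne' (x_eq ▸ point_eq)) ?_
  exact le_antisymm (le_of_mem hp.1.2 hp'.1.2 x_eq (x_mem p hp) (x_mem p' hp'))
    (le_of_mem hp'.1.2 hp.1.2 x_eq.symm (x_mem p' hp') (x_mem p hp))

section ZeroCount

lemma natCast_le_encard_iff_exists_injective {Z : Type*} {s : Set Z} {k : ℕ} :
    (k : ℕ∞) ≤ s.encard ↔ ∃ x : Fin k → Z, Function.Injective x ∧ ∀ i, x i ∈ s := by
  refine ⟨fun le ↦ ?_, fun ⟨x, inj, mem⟩ ↦ ?_⟩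
  · obtain ⟨t, t_subset, t_card⟩ := exists_subset_encard_eq le
    have t_finite : t.Finite := finite_of_encard_eq_coe t_card
    have card_eq : t_finite.toFinset.card = k := by
      rwa [t_finite.encard_eq_coe_toFinset_card, Nat.cast_inj] at t_card
    let e := (t_finite.toFinset.equivFinOfCardEq card_eq).symm
    exact ⟨fun i ↦ e i, Subtype.val_injective.comp e.injective,
      fun i ↦ t_subset (t_finite.mem_toFinset.1 (e i).2)⟩
  · simpa using encard_le_encard_of_injOn (s := univ) (fun i _ ↦ mem i) inj.injOn

lemma isOpen_injective {Z ι : Type*} [Finite ι] [TopologicalSpace Z] [T2Space Z] :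
    IsOpen {x : ι → Z | Function.Injective x} := by
  have eq_iInter : {x : ι → Z | Function.Injective x} =
      ⋂ i, ⋂ j, ⋂ _ : i ≠ j, {x | x i ≠ x j} := by
    ext x
    simp [Function.Injective, not_imp_not]
  rw [eq_iInter]
  exact isOpen_iInter_of_finite fun i ↦ isOpen_iInter_of_finite fun j ↦
    isOpen_iInter_of_finite fun _ ↦ isOpen_ne_fun (continuous_apply i) (continuous_apply j)

lemma isClosed_exists_mem_of_isCompact {α K : Type*} [TopologicalSpace α] [TopologicalSpace K]
    {s : Set K} (hs : IsCompact s) {C : Set (α × K)} (hC : IsClosed C) :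
    IsClosed {a | ∃ x ∈ s, (a, x) ∈ C} := by
  have := isCompact_iff_compactSpace.1 hs
  have image_eq : {a | ∃ x ∈ s, (a, x) ∈ C} =
      Prod.fst '' {p : α × s | (p.1, (p.2 : K)) ∈ C} := by
    ext a
    simp
  rw [image_eq]
  exact isClosedMap_fst_of_compactSpace _
    (hC.preimage (continuous_fst.prodMk (continuous_subtype_val.comp continuous_snd)))

variable {α Z Y : Type*} [TopologicalSpace α] [MeasurableSpace α] [OpensMeasurableSpace α]
  [TopologicalSpace Z] [T2Space Z] [LocallyCompactSpace Z] [SecondCountableTopology Z]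
  [TopologicalSpace Y] [T1Space Y] {f : α → Z → Y}

lemma measurableSet_natCast_le_encard_fiber (hf : Continuous fun p : α × Z ↦ f p.1 p.2) (y : Y)
    (k : ℕ) : MeasurableSet {a | (k : ℕ∞) ≤ {z | f a z = y}.encard} := by
  have : LocallyCompactSpace {x : Fin k → Z | Function.Injective x} :=
    isOpen_injective.locallyCompactSpace
  obtain ⟨K, K_compact, K_iUnion⟩ : IsSigmaCompact {x : Fin k → Z | Function.Injective x} :=
    isSigmaCompact_iff_sigmaCompactSpace.2 inferInstance
  have fiber_closed : IsClosed {p : α × (Fin k → Z) | ∀ i, f p.1 (p.2 i) = y} := by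
    rw [ofPred_forall]
    exact isClosed_iInter fun i ↦ isClosed_singleton.preimage
      (hf.comp (g := fun p : α × Z ↦ f p.1 p.2) (f := fun p : α × (Fin k → Z) ↦ (p.1, p.2 i))
        (by fun_prop))
  have eq_iUnion : {a | (k : ℕ∞) ≤ {z | f a z = y}.encard} =
      ⋃ j, {a | ∃ x ∈ K j, ∀ i, f a (x i) = y} := by
    ext a
    have mem_K (x : Fin k → Z) : Function.Injective x ↔ ∃ j, x ∈ K j := by
      rw [← mem_iUnion, K_iUnion]; rfl
    simp only [mem_ofPred_eq, natCast_le_encard_iff_exists_injective, mem_K, mem_iUnion]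
    tauto
  rw [eq_iUnion]
  exact .iUnion fun j ↦ (isClosed_exists_mem_of_isCompact (K_compact j) fiber_closed).measurableSet

lemma measurable_ncard_fiber (hf : Continuous fun p : α × Z ↦ f p.1 p.2) (y : Y) :
    Measurable fun a ↦ {z | f a z = y}.ncard := by
  have encard_measurable : Measurable fun a ↦ {z | f a z = y}.encard := by
    refine ENat.measurable_iff.2 fun k ↦ ?_
    have eq_diff : (fun a ↦ {z | f a z = y}.encard) ⁻¹' {(k : ℕ∞)} =
        {a | (k : ℕ∞) ≤ {z | f a z = y}.encard} \
          {a | ((k + 1 : ℕ) : ℕ∞) ≤ {z | f a z = y}.encard} := by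
      ext a
      rw [mem_preimage, mem_singleton_iff, Set.mem_sdiff, mem_ofPred_eq, mem_ofPred_eq,
        Nat.cast_add_one, ENat.add_one_le_iff (ENat.natCast_ne_top k), not_lt, le_antisymm_iff,
        and_comm]
    rw [eq_diff]
    exact (measurableSet_natCast_le_encard_fiber hf y k).diff
      (measurableSet_natCast_le_encard_fiber hf y (k + 1))
  exact (measurable_from_top (f := ENat.toNat)).comp encard_measurable

end ZeroCount

/-! ### The Kostlan field -/

section ProductMeasure

variable {ι : Type*} [Fintype ι] {E : ι → Type*}

lemma integral_sum_pi [∀ i, MeasurableSpace (E i)] {μ : ∀ i, Measure (E i)}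
    [∀ i, IsProbabilityMeasure (μ i)] {X : ∀ i, E i → ℝ} (hX : ∀ i, Integrable (X i) (μ i)) :
    ∫ ω, ∑ i, X i (ω i) ∂Measure.pi μ = ∑ i, ∫ x, X i x ∂μ i := by
  rw [integral_finsetSum _ fun i _ ↦ integrable_comp_eval (hX i)]
  exact Finset.sum_congr rfl fun i _ ↦ integral_comp_eval (hX i).aestronglyMeasurable

lemma covariance_sum_pi [∀ i, MeasurableSpace (E i)] {μ : ∀ i, Measure (E i)}
    [∀ i, IsProbabilityMeasure (μ i)] {X Y : ∀ i, E i → ℝ} (hX : ∀ i, MemLp (X i) 2 (μ i))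
    (hY : ∀ i, MemLp (Y i) 2 (μ i)) :
    cov[fun ω ↦ ∑ i, X i (ω i), fun ω ↦ ∑ i, Y i (ω i); Measure.pi μ] =
      ∑ i, cov[X i, Y i; μ i] := by
  have memLp_X (i : ι) : MemLp (fun ω ↦ X i (ω i)) 2 (Measure.pi μ) :=
    (hX i).comp_measurePreserving (measurePreserving_eval μ i)
  have memLp_Y (i : ι) : MemLp (fun ω ↦ Y i (ω i)) 2 (Measure.pi μ) :=
    (hY i).comp_measurePreserving (measurePreserving_eval μ i)
  have diagonal (i : ι) : cov[fun ω ↦ X i (ω i), fun ω ↦ Y i (ω i); Measure.pi μ] =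
      cov[X i, Y i; μ i] := by
    have map_eval := (measurePreserving_eval μ i).map_eq
    conv_rhs => rw [← map_eval]
    refine (covariance_map_fun ?_ ?_ (measurable_pi_apply i).aemeasurable).symm <;>
      rw [map_eval]
    exacts [(hX i).aestronglyMeasurable, (hY i).aestronglyMeasurable]
  have off_diagonal (i j : ι) (hij : j ≠ i) :
      cov[fun ω ↦ X i (ω i), fun ω ↦ Y j (ω j); Measure.pi μ] = 0 := by
    have indep :=
      (iIndepFun_pi (μ := μ) (X := fun _ x ↦ x) fun _ ↦ aemeasurable_id).indepFun hij.symm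
    refine IndepFun.covariance_eq_zero ?_ (memLp_X i) (memLp_Y j)
    refine indep.comp₀ (measurable_pi_apply i).aemeasurable
      (measurable_pi_apply j).aemeasurable ?_ ?_
    · exact (measurePreserving_eval μ i).map_eq ▸ (hX i).aestronglyMeasurable.aemeasurable
    · exact (measurePreserving_eval μ j).map_eq ▸ (hY j).aestronglyMeasurable.aemeasurable
  rw [covariance_fun_sum_fun_sum memLp_X memLp_Y]
  refine Finset.sum_congr rfl fun i _ ↦ ?_
  rw [Finset.sum_eq_single_of_mem i (Finset.mem_univ i) fun j _ hj ↦ off_diagonal i j hj]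
  exact diagonal i

lemma isGaussian_pi [∀ i, NormedAddCommGroup (E i)] [∀ i, NormedSpace ℝ (E i)]
    [∀ i, CompleteSpace (E i)] [∀ i, MeasurableSpace (E i)] [∀ i, BorelSpace (E i)]
    [∀ i, SecondCountableTopology (E i)] (μ : ∀ i, Measure (E i)) [∀ i, IsGaussian (μ i)] :
    IsGaussian (Measure.pi μ) := by
  have marginal (i : ι) : HasGaussianLaw (fun ω : ∀ j, E j ↦ ω i) (Measure.pi μ) :=
    ⟨(measurePreserving_eval μ i).map_eq ▸ inferInstance⟩
  have law := iIndepFun.hasGaussianLaw marginal (iIndepFun_pi fun _ ↦ aemeasurable_id)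
  simpa using law.isGaussian_map

end ProductMeasure

section Kostlan

variable {m : ℕ}

/-- The law of the coefficients `((a_k, b_k))` of a complex Kostlan polynomial of degree `m`. -/
noncomputable abbrev kostlanMeasure (m : ℕ) : Measure (Fin (m + 1) → ℝ × ℝ) :=
  Measure.pi fun k : Fin (m + 1) ↦ (gaussianReal 0 ((m.choose k : ℝ≥0) / 2)).prod
    (gaussianReal 0 ((m.choose k : ℝ≥0) / 2))

/-- The polynomial function `q(z) = ∑ k, (a_k + i b_k) z ^ k` with coefficients
`c k = (a_k, b_k)`. -/
noncomputable def coeffEval (c : Fin (m + 1) → ℝ × ℝ) (z : ℂ) : ℂ :=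
  ∑ k, ((c k).1 + (c k).2 * I) * z ^ (k : ℕ)

/-- The harmonic function `q + conj q = 2 Re q` as a real-valued field, where `q` is the polynomial
with coefficients `c`. -/
noncomputable def kostlanField (c : Fin (m + 1) → ℝ × ℝ) (z : ℂ) : ℝ :=
  2 * (coeffEval c z).re

lemma kostlanField_eq_sum (c : Fin (m + 1) → ℝ × ℝ) (z : ℂ) : kostlanField c z =
    ∑ k : Fin (m + 1), (2 * (z ^ (k : ℕ)).re * (c k).1 + -2 * (z ^ (k : ℕ)).im * (c k).2) := by
  rw [kostlanField, coeffEval, re_sum, Finset.mul_sum]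
  refine Finset.sum_congr rfl fun k _ ↦ ?_
  simp only [mul_re, add_re, add_im, ofReal_re, ofReal_im, mul_im, I_re, I_im]
  ring

lemma coeffEval_add_conj (c : Fin (m + 1) → ℝ × ℝ) (z : ℂ) :
    coeffEval c z + starRingEnd ℂ (coeffEval c z) = kostlanField c z :=
  add_conj _

lemma continuous_kostlanField :
    Continuous fun p : (Fin (m + 1) → ℝ × ℝ) × ℂ ↦ kostlanField p.1 p.2 := by
  unfold kostlanField coeffEval
  fun_prop

lemma measurable_kostlanField (z : ℂ) :
    Measurable fun c : Fin (m + 1) → ℝ × ℝ ↦ kostlanField c z :=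
  (continuous_kostlanField.comp (Continuous.prodMk_left z)).measurable

lemma integral_kostlanField (z : ℂ) : ∫ c, kostlanField c z ∂kostlanMeasure m = 0 := by
  simp only [kostlanField_eq_sum]
  rw [integral_sum_pi fun k ↦ (hasGaussianLaw_linear_gaussianReal_prod _ _ _).integrable]
  exact Finset.sum_eq_zero fun k _ ↦ integral_linear_gaussianReal_prod _ _ _

lemma covariance_kostlanField (z w : ℂ) :
    cov[fun c ↦ kostlanField c z, fun c ↦ kostlanField c w; kostlanMeasure m] =
      2 * ((1 + z * starRingEnd ℂ w) ^ m).re := by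
  simp only [kostlanField_eq_sum]
  rw [covariance_sum_pi (fun k ↦ (hasGaussianLaw_linear_gaussianReal_prod _ _ _).memLp_two)
    (fun k ↦ (hasGaussianLaw_linear_gaussianReal_prod _ _ _).memLp_two), add_comm 1, add_pow,
    re_sum, Finset.mul_sum, Finset.sum_range]
  refine Finset.sum_congr rfl fun k _ ↦ ?_
  rw [covariance_linear_gaussianReal_prod, one_pow, mul_one, mul_pow, ← map_pow, ← ofReal_natCast,
    re_mul_ofReal, mul_re, conj_re, conj_im]
  push_cast
  ring

lemma variance_kostlanField (z : ℂ) :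
    Var[fun c ↦ kostlanField c z; kostlanMeasure m] = 2 * (1 + normSq z) ^ m := by
  rw [← covariance_self (measurable_kostlanField z).aemeasurable, covariance_kostlanField, mul_conj]
  norm_cast

lemma hasGaussianLaw_kostlanField (z w : ℂ) :
    HasGaussianLaw (fun c ↦ (kostlanField c z, kostlanField c w)) (kostlanMeasure m) := by
  have := isGaussian_pi fun k : Fin (m + 1) ↦ (gaussianReal 0 ((m.choose k : ℝ≥0) / 2)).prod
    (gaussianReal 0 ((m.choose k : ℝ≥0) / 2))
  let evalAt (z : ℂ) : (Fin (m + 1) → ℝ × ℝ) →L[ℝ] ℝ :=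
    LinearMap.toContinuousLinearMap
      { toFun := fun c ↦ kostlanField c z
        map_add' := fun c d ↦ by
          simp only [kostlanField_eq_sum, ← Finset.sum_add_distrib, Pi.add_apply, Prod.fst_add,
            Prod.snd_add]
          exact Finset.sum_congr rfl fun k _ ↦ by ring
        map_smul' := fun t c ↦ by
          simp only [kostlanField_eq_sum, RingHom.id_apply, Pi.smul_apply, Prod.smul_fst,
            Prod.smul_snd, smul_eq_mul, Finset.mul_sum]
          exact Finset.sum_congr rfl fun k _ ↦ by ring }
  exact IsGaussian.hasGaussianLaw_id.map_fun ((evalAt z).prod (evalAt w))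

lemma ae_kostlanField_ne_zero (z : ℂ) : ∀ᵐ c ∂kostlanMeasure m, kostlanField c z ≠ 0 := by
  have law := (hasGaussianLaw_kostlanField (m := m) z z).fst
  have var_ne_zero : Var[fun c ↦ kostlanField c z; kostlanMeasure m].toNNReal ≠ 0 := by
    rw [variance_kostlanField]
    have := normSq_nonneg z
    exact (Real.toNNReal_pos.2 (by positivity)).ne'
  have := nullSingletonClass_gaussianReal (μ := ∫ c, kostlanField c z ∂kostlanMeasure m) var_ne_zero
  refine ae_of_ae_map (p := (· ≠ 0)) law.aemeasurable ?_
  rw [law.map_eq_gaussianReal]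
  exact Measure.ae_ne _ 0

lemma kostlanMeasure_real_mul_neg {ζ : ℂ} (hζ : ‖ζ‖ = 1) {φ ψ : ℝ} (hφ : 0 < Real.cos φ)
    (hψ : 0 < Real.cos ψ) :
    (kostlanMeasure m).real
        {c | kostlanField c (Real.tan φ • ζ) * kostlanField c (Real.tan ψ • ζ) < 0} =
      Real.arccos (Real.cos (φ - ψ) ^ m) / π := by
  have sqrt_var {α : ℝ} (hα : 0 < Real.cos α) :
      √Var[fun c ↦ kostlanField c (Real.tan α • ζ); kostlanMeasure m] =
        √2 / Real.cos α ^ m := by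
    rw [variance_kostlanField, real_smul, normSq_mul, normSq_ofReal, normSq_eq_norm_sq, hζ, ← sq,
      one_pow, mul_one, ← inv_inv (1 + _), Real.inv_one_add_tan_sq hα.ne',
      Real.sqrt_mul zero_le_two, inv_pow, ← pow_mul, mul_comm 2 m, pow_mul, Real.sqrt_inv,
      Real.sqrt_sq (by positivity)]
    rfl
  have var_ne_zero {α : ℝ} (hα : 0 < Real.cos α) :
      Var[fun c ↦ kostlanField c (Real.tan α • ζ); kostlanMeasure m] ≠ 0 := fun h ↦ by
    have := sqrt_var hα
    rw [h, Real.sqrt_zero] at this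
    exact absurd this (by positivity)
  have cov_eq : cov[fun c ↦ kostlanField c (Real.tan φ • ζ),
      fun c ↦ kostlanField c (Real.tan ψ • ζ); kostlanMeasure m] =
        2 * (1 + Real.tan φ * Real.tan ψ) ^ m := by
    rw [covariance_kostlanField, real_smul, real_smul, map_mul, conj_ofReal, mul_mul_mul_comm,
      mul_conj, normSq_eq_norm_sq, hζ]
    norm_cast
    simp
  have cos_sub_eq : (1 + Real.tan φ * Real.tan ψ) * (Real.cos φ * Real.cos ψ) =
      Real.cos (φ - ψ) := by
    rw [Real.cos_sub, Real.tan_eq_sin_div_cos, Real.tan_eq_sin_div_cos]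
    field_simp
  rw [measureReal_mul_neg_eq_arccos_div_pi (hasGaussianLaw_kostlanField _ _)
    (integral_kostlanField _) (integral_kostlanField _) (var_ne_zero hφ) (var_ne_zero hψ),
    cov_eq, sqrt_var hφ, sqrt_var hψ]
  congr 2
  rw [div_mul_div_comm, Real.mul_self_sqrt zero_le_two, ← mul_pow, ← cos_sub_eq, mul_pow (1 + _)]
  field_simp

end Kostlan

/-! ### Zeros of the harmonic polynomial -/

section HarmonicPolynomial

variable {m n : ℕ} {ε : ℝ}

/-- The zero set of the harmonic polynomial `ε z ^ n + q + conj q`, where `q` has coefficients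
`c`. -/
def harmonicZeros (n : ℕ) (ε : ℝ) (c : Fin (m + 1) → ℝ × ℝ) : Set ℂ :=
  {z | ε * z ^ n + coeffEval c z + starRingEnd ℂ (coeffEval c z) = 0}

/-- The real part `ε Re (z ^ n) + 2 Re q(z)` of the harmonic polynomial. -/
noncomputable def harmonicRe (n : ℕ) (ε : ℝ) (c : Fin (m + 1) → ℝ × ℝ) (z : ℂ) : ℝ :=
  ε * (z ^ n).re + kostlanField c z

lemma mem_harmonicZeros_iff (hε : ε ≠ 0) {c : Fin (m + 1) → ℝ × ℝ} {z : ℂ} :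
    z ∈ harmonicZeros n ε c ↔ harmonicRe n ε c z = 0 ∧ (z ^ n).im = 0 := by
  change _ = _ ↔ _
  rw [add_assoc, coeffEval_add_conj, Complex.ext_iff]
  simp [harmonicRe, hε]

lemma continuous_harmonicRe (c : Fin (m + 1) → ℝ × ℝ) : Continuous (harmonicRe n ε c) := by
  have := continuous_kostlanField.comp (Continuous.prodMk_right c)
  unfold harmonicRe
  fun_prop

lemma measurable_harmonicRe (z : ℂ) :
    Measurable fun c : Fin (m + 1) → ℝ × ℝ ↦ harmonicRe n ε c z :=
  (measurable_kostlanField z).const_add _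

lemma tendsto_kostlanMeasure_real_harmonicRe_mul_neg (z w : ℂ) :
    Tendsto (fun ε ↦ (kostlanMeasure m).real
        {c | harmonicRe n ε c z * harmonicRe n ε c w < 0}) (𝓝 0)
      (𝓝 ((kostlanMeasure m).real {c | kostlanField c z * kostlanField c w < 0})) := by
  refine tendsto_measureReal_lt_zero
    (fun _ ↦ (measurable_harmonicRe z).mul (measurable_harmonicRe w))
    ((measurable_kostlanField z).mul (measurable_kostlanField w)) (ae_of_all _ fun c ↦ ?_) ?_
  · have cont : Continuous fun ε ↦ harmonicRe n ε c z * harmonicRe n ε c w := by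
      unfold harmonicRe
      fun_prop
    simpa [harmonicRe] using cont.tendsto 0
  · filter_upwards [ae_kostlanField_ne_zero z, ae_kostlanField_ne_zero w] with c hz hw
      using mul_ne_zero hz hw

lemma exists_polynomial_eval_eq_harmonicRe_smul (c : Fin (m + 1) → ℝ × ℝ) (ζ : ℂ) :
    ∃ p : Polynomial ℝ, p.natDegree ≤ max n m ∧ ∀ r, p.eval r = harmonicRe n ε c (r • ζ) := by
  refine ⟨.C (ε * (ζ ^ n).re) * .X ^ n +
    ∑ k : Fin (m + 1), .C (2 * (((c k).1 + (c k).2 * I) * ζ ^ (k : ℕ)).re) * .X ^ (k : ℕ), ?_,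
    fun r ↦ ?_⟩
  · refine Polynomial.natDegree_add_le_of_degree_le
      ((Polynomial.natDegree_C_mul_X_pow_le _ _).trans (le_max_left _ _))
      (Polynomial.natDegree_sum_le_of_forall_le _ _ fun k _ ↦ ?_)
    exact (Polynomial.natDegree_C_mul_X_pow_le _ _).trans
      ((Nat.lt_succ_iff.1 k.2).trans (le_max_right _ _))
  · have re_mul_smul_pow (w : ℂ) (k : ℕ) : (w * (r • ζ) ^ k).re = (w * ζ ^ k).re * r ^ k := by
      rw [smul_pow, mul_smul_comm, smul_re, smul_eq_mul, mul_comm]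
    have re_smul_pow : ((r • ζ) ^ n).re = (ζ ^ n).re * r ^ n := by
      simpa only [one_mul] using re_mul_smul_pow 1 n
    rw [harmonicRe, kostlanField, coeffEval, re_sum, Finset.mul_sum, Polynomial.eval_add,
      Polynomial.eval_finsetSum]
    simp only [Polynomial.eval_mul, Polynomial.eval_C, Polynomial.eval_pow, Polynomial.eval_X,
      re_mul_smul_pow, re_smul_pow, mul_assoc]

lemma exists_unit_smul_eq_of_im_pow_eq_zero {z : ℂ} (hz : z ≠ 0) (him : (z ^ n).im = 0) :
    ∃ ζ : ℂ, ζ ^ (2 * n) = 1 ∧ ‖z‖ • ζ = z := by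
  have norm_ne_zero : (‖z‖ : ℂ) ≠ 0 := ofReal_ne_zero.2 (norm_ne_zero_iff.2 hz)
  refine ⟨z / ‖z‖, ?_, by rw [real_smul, mul_div_cancel₀ _ norm_ne_zero]⟩
  have pow_real : z ^ n = (z ^ n).re := Complex.ext rfl him
  have sq_eq : (z ^ n) ^ 2 = (‖z‖ ^ n : ℂ) ^ 2 := by
    rw [← ofReal_pow, ← norm_pow, pow_real, norm_real, ← ofReal_pow, ← ofReal_pow,
      Real.norm_eq_abs, sq_abs]
  rw [mul_comm, pow_mul, div_pow, div_pow, sq_eq, div_self (by positivity)]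

lemma finite_harmonicZeros_and_ncard_le (hn : n ≠ 0) (hε : ε ≠ 0)
    {c : Fin (m + 1) → ℝ × ℝ} (hc : kostlanField c 0 ≠ 0) :
    (harmonicZeros n ε c).Finite ∧ (harmonicZeros n ε c).ncard ≤ 2 * n * max n m := by
  have harmonicRe_zero : harmonicRe n ε c 0 ≠ 0 := by simpa [harmonicRe, hn]
  choose p degree_le eval_eq using
    exists_polynomial_eval_eq_harmonicRe_smul (n := n) (ε := ε) c
  have p_ne_zero (ζ : ℂ) : p ζ ≠ 0 := fun h ↦ harmonicRe_zero <| by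
    have := eval_eq ζ 0
    rwa [h, Polynomial.eval_zero, zero_smul, eq_comm] at this
  set cover : Finset ℂ := (Polynomial.nthRootsFinset (2 * n) (1 : ℂ)).biUnion
    fun ζ ↦ (p ζ).roots.toFinset.image (· • ζ)
  have subset_cover : harmonicZeros n ε c ⊆ cover := fun z hz ↦ by
    obtain ⟨re_zero, im_zero⟩ := (mem_harmonicZeros_iff hε).1 hz
    have z_ne_zero : z ≠ 0 := fun h ↦ harmonicRe_zero (h ▸ re_zero)
    obtain ⟨ζ, ζ_pow, z_eq⟩ := exists_unit_smul_eq_of_im_pow_eq_zero z_ne_zero im_zero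
    refine Finset.mem_biUnion.2 ⟨ζ, (Polynomial.mem_nthRootsFinset (by positivity) _).2 ζ_pow,
      Finset.mem_image.2 ⟨‖z‖, ?_, z_eq⟩⟩
    rw [Multiset.mem_toFinset, Polynomial.mem_roots (p_ne_zero ζ), Polynomial.IsRoot, eval_eq, z_eq,
      re_zero]
  refine ⟨cover.finite_toSet.subset subset_cover, ?_⟩
  calc (harmonicZeros n ε c).ncard
      ≤ cover.card := by
        rw [← ncard_coe_finset]
        exact ncard_le_ncard subset_cover
    _ ≤ (Polynomial.nthRootsFinset (2 * n) (1 : ℂ)).card * max n m :=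
        Finset.card_biUnion_le_card_mul _ _ _ fun ζ _ ↦ Finset.card_image_le.trans <|
          (Multiset.toFinset_card_le _).trans ((p ζ).card_roots'.trans (degree_le ζ))
    _ ≤ 2 * n * max n m := by
        gcongr
        exact (Multiset.toFinset_card_le _).trans (Polynomial.card_nthRoots _ _)

lemma measurable_ncard_harmonicZeros :
    Measurable fun c : Fin (m + 1) → ℝ × ℝ ↦ ((harmonicZeros n ε c).ncard : ℝ) := by
  refine measurable_from_top.comp (measurable_ncard_fiber (f := fun c z ↦
    ε * z ^ n + coeffEval c z + starRingEnd ℂ (coeffEval c z)) ?_ 0)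
  unfold coeffEval
  fun_prop

lemma integrable_ncard_harmonicZeros (hn : n ≠ 0) (hε : ε ≠ 0) :
    Integrable (fun c ↦ ((harmonicZeros n ε c).ncard : ℝ)) (kostlanMeasure m) := by
  refine .of_bound measurable_ncard_harmonicZeros.aestronglyMeasurable (2 * n * max n m : ℕ) ?_
  filter_upwards [ae_kostlanField_ne_zero 0] with c hc
  rw [Real.norm_natCast]
  exact_mod_cast (finite_harmonicZeros_and_ncard_le hn hε hc).2

/-- The `i`-th node of the uniform grid of mesh `π / (2 (L + 1))` in `[0, π / 2)`. The angle `φ`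
stands for the radius `tan φ`, in which the field on a ray has correlation `cos (φ - ψ) ^ m`. -/
noncomputable def gridAngle (L i : ℕ) : ℝ := i * (π / (2 * (L + 1)))

lemma gridAngle_mem_Ioo {L i : ℕ} (hi : i ≤ L) : gridAngle L i ∈ Ioo (-(π / 2)) (π / 2) := by
  have nonneg : 0 ≤ gridAngle L i := by unfold gridAngle; positivity
  refine ⟨(neg_lt_zero.2 Real.pi_div_two_pos).trans_le nonneg, ?_⟩
  have lt : (i : ℝ) < L + 1 := by exact_mod_cast Nat.lt_succ_of_le hi
  calc gridAngle L i < (L + 1) * (π / (2 * (L + 1))) := by unfold gridAngle; gcongr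
    _ = π / 2 := by field_simp

lemma strictMono_gridAngle (L : ℕ) : StrictMono (gridAngle L) := fun i j hij ↦ by
  unfold gridAngle
  gcongr

lemma strictMonoOn_tan_gridAngle (L : ℕ) :
    StrictMonoOn (fun i ↦ Real.tan (gridAngle L i)) (Iic L) := fun _ hi _ hj hij ↦
  Real.strictMonoOn_tan (gridAngle_mem_Ioo hi) (gridAngle_mem_Ioo hj) (strictMono_gridAngle L hij)

/-- The event that the real part of the harmonic polynomial changes sign on the ray through `ζ`
between the radii numbered `i` and `i + 1` of the grid, where `p = (ζ, i)`. -/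
def signChange {m : ℕ} (n : ℕ) (ε : ℝ) (L : ℕ) (p : ℂ × ℕ) : Set (Fin (m + 1) → ℝ × ℝ) :=
  {c | harmonicRe n ε c (Real.tan (gridAngle L p.2) • p.1) *
    harmonicRe n ε c (Real.tan (gridAngle L (p.2 + 1)) • p.1) < 0}

lemma measurableSet_signChange {L : ℕ} {p : ℂ × ℕ} :
    MeasurableSet (signChange (m := m) n ε L p) :=
  measurableSet_lt ((measurable_harmonicRe _).mul (measurable_harmonicRe _)) measurable_const

lemma tendsto_measureReal_signChange {L i : ℕ} {ζ : ℂ} (hζ : ‖ζ‖ = 1) (hi : i < L) :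
    Tendsto (fun ε ↦ (kostlanMeasure m).real (signChange n ε L (ζ, i))) (𝓝 0)
      (𝓝 (Real.arccos (Real.cos (π / (2 * (L + 1))) ^ m) / π)) := by
  have gap : gridAngle L i - gridAngle L (i + 1) = -(π / (2 * (L + 1))) := by
    unfold gridAngle
    push_cast
    ring
  rw [← Real.cos_neg, ← gap, ← kostlanMeasure_real_mul_neg hζ
    (Real.cos_pos_of_mem_Ioo (gridAngle_mem_Ioo hi.le))
    (Real.cos_pos_of_mem_Ioo (gridAngle_mem_Ioo (Nat.succ_le_of_lt hi)))]
  exact tendsto_kostlanMeasure_real_harmonicRe_mul_neg _ _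

lemma im_pow_eq_zero_of_pow_two_mul_eq_one {ζ : ℂ} (hζ : ζ ^ (2 * n) = 1) : (ζ ^ n).im = 0 := by
  rw [mul_comm, pow_mul] at hζ
  obtain h | h := sq_eq_one_iff.1 hζ <;> simp [h]

lemma encard_signChange_le_encard_harmonicZeros (hn : n ≠ 0) (hε : ε ≠ 0) (L : ℕ)
    (c : Fin (m + 1) → ℝ × ℝ) :
    {p : ℂ × ℕ | (p.1 ^ (2 * n) = 1 ∧ p.2 < L) ∧ c ∈ signChange n ε L p}.encard ≤
      (harmonicZeros n ε c).encard := by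
  refine (encard_sign_changes_le_encard_zeros (directions := {ζ | ζ ^ (2 * n) = 1})
    (continuous_harmonicRe c) (fun ζ hζ ↦ norm_eq_one_of_pow_eq_one hζ (by positivity))
    (by simp [gridAngle]) (strictMonoOn_tan_gridAngle L)).trans (encard_le_encard ?_)
  rintro _ ⟨re_zero, r, ζ, hζ, rfl⟩
  refine (mem_harmonicZeros_iff hε).2 ⟨re_zero, ?_⟩
  rw [smul_pow, smul_im, im_pow_eq_zero_of_pow_two_mul_eq_one hζ, smul_zero]

lemma sum_measureReal_signChange_le_integral_ncard (hn : n ≠ 0) (hε : ε ≠ 0) (L : ℕ) :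
    ∑ p ∈ Polynomial.nthRootsFinset (2 * n) (1 : ℂ) ×ˢ Finset.range L,
        (kostlanMeasure m).real (signChange n ε L p) ≤
      ∫ c, ((harmonicZeros n ε c).ncard : ℝ) ∂kostlanMeasure m := by
  classical
  simp_rw [← integral_indicator_one (measurableSet_signChange (m := m) (n := n) (ε := ε) (L := L))]
  have integrable (p : ℂ × ℕ) : Integrable ((signChange n ε L p).indicator 1) (kostlanMeasure m) :=
    (integrable_indicator_iff measurableSet_signChange).2 (integrable_const (1 : ℝ)).integrableOn
  rw [← integral_finsetSum _ fun p _ ↦ integrable p]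
  refine integral_mono_ae (integrable_finsetSum _ fun p _ ↦ integrable p)
    (integrable_ncard_harmonicZeros hn hε) ?_
  filter_upwards [ae_kostlanField_ne_zero 0] with c hc
  have finite := (finite_harmonicZeros_and_ncard_le hn hε hc).1
  have count := encard_signChange_le_encard_harmonicZeros hn hε L c
  have set_eq : {p : ℂ × ℕ | (p.1 ^ (2 * n) = 1 ∧ p.2 < L) ∧
      c ∈ signChange n ε L p} = ((Polynomial.nthRootsFinset (2 * n) (1 : ℂ) ×ˢ
        Finset.range L).filter (c ∈ signChange n ε L ·) : Finset (ℂ × ℕ)) := by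
    ext p
    simp [Polynomial.mem_nthRootsFinset (show 0 < 2 * n by positivity)]
  rw [set_eq, encard_coe_eq_coe_finsetCard, ← finite.cast_ncard_eq, Nat.cast_le] at count
  simpa [indicator_apply] using count

lemma tendsto_sum_measureReal_signChange (hn : n ≠ 0) (L : ℕ) :
    Tendsto (fun ε ↦ ∑ p ∈ Polynomial.nthRootsFinset (2 * n) (1 : ℂ) ×ˢ Finset.range L,
        (kostlanMeasure m).real (signChange n ε L p)) (𝓝 0)
      (𝓝 (n * (2 * L * (Real.arccos (Real.cos (π / (2 * (L + 1))) ^ m) / π)))) := by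
  have card_roots : (Polynomial.nthRootsFinset (2 * n) (1 : ℂ)).card = 2 * n :=
    (Complex.isPrimitiveRoot_exp (2 * n) (by positivity)).card_nthRootsFinset
  have lim := tendsto_finsetSum (Polynomial.nthRootsFinset (2 * n) (1 : ℂ) ×ˢ Finset.range L)
    fun p hp ↦ tendsto_measureReal_signChange (m := m) (n := n) (ζ := p.1) (i := p.2) (L := L)
      (norm_eq_one_of_pow_eq_one ((Polynomial.mem_nthRootsFinset (by positivity) _).1
        (Finset.mem_product.1 hp).1) (by positivity))
      (Finset.mem_range.1 (Finset.mem_product.1 hp).2)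
  convert lim using 2
  rw [Finset.sum_const, Finset.card_product, card_roots, Finset.card_range, nsmul_eq_mul]
  push_cast
  ring

end HarmonicPolynomial

theorem expected_total_zeros_general (n m : ℕ) (hn : n ≠ 0) (ε₀ : ℝ) (hε₀ : 0 < ε₀) :
    ∃ ε₁ : ℝ, 0 < ε₁ ∧ ∀ ε : ℝ, 0 < ε → ε ≤ ε₁ →
      n * (√m - ε₀) ≤ ∫ c, ((harmonicZeros n ε c).ncard : ℝ) ∂kostlanMeasure m := by
  obtain ⟨L, hL⟩ := (eventually_lt_mul_arccos_cos_pow (sub_lt_self √m hε₀)).exists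
  have limit_gt : n * (√m - ε₀) <
      n * (2 * L * (Real.arccos (Real.cos (π / (2 * (L + 1))) ^ m) / π)) := by gcongr
  have eventually_lt := (tendsto_sum_measureReal_signChange hn L).eventually_const_lt limit_gt
  obtain ⟨ε₁, ε₁_pos, hε₁⟩ :=
    mem_nhdsGT_iff_exists_Ioc_subset.1 (nhdsWithin_le_nhds eventually_lt)
  refine ⟨ε₁, ε₁_pos, fun ε ε_pos ε_le ↦ ?_⟩
  exact (hε₁ ⟨ε_pos, ε_le⟩).le.trans
    (sum_measureReal_signChange_le_integral_ncard hn ε_pos.ne' L)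

/-- Let `n > m ≥ 1`, let `ν` be the product of `N(0,(1/2)C(m,k)) ⊗ N(0,(1/2)C(m,k))`
governing coefficients `((a_k,b_k))_k`, and `q(z) = Σ_k (a_k + i b_k) z^k`. For every
`ε₀ > 0` there exists `ε₁ > 0` such that for all `0 < ε ≤ ε₁`, the expected number of zeros
of `ε z^n + q(z) + conj(q(z))` is at least `n(√m − ε₀)`. -/
theorem expected_total_zeros (n m : ℕ) (hm : 1 ≤ m) (hmn : m < n)
    (ε₀ : ℝ) (hε₀ : 0 < ε₀) :
    ∃ ε₁ : ℝ, 0 < ε₁ ∧ ∀ ε : ℝ, 0 < ε → ε ≤ ε₁ →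
      (n : ℝ) * (Real.sqrt m - ε₀) ≤
        ∫ c : Fin (m + 1) → ℝ × ℝ,
          (({z : ℂ | (ε : ℂ) * z ^ n +
              (∑ k : Fin (m + 1), (((c k).1 : ℂ) + ((c k).2 : ℂ) * Complex.I) * z ^ (k : ℕ)) +
              (starRingEnd ℂ)
                (∑ k : Fin (m + 1), (((c k).1 : ℂ) + ((c k).2 : ℂ) * Complex.I) * z ^ (k : ℕ))
              = 0}.ncard : ℝ))
        ∂(Measure.pi fun k : Fin (m + 1) =>
            (gaussianReal 0 ((m.choose k : ℝ≥0) / 2)).prod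
              (gaussianReal 0 ((m.choose k : ℝ≥0) / 2))) :=
  expected_total_zeros_general n m (Nat.ne_zero_of_lt hmn) ε₀ hε₀
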